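/- arXiv:0811.3810 — 4 statements merged into one kernel-verified Lean document; each statement's English description precedes it below -/
import Mathlib

section
/- Let r ≥ 0 and s ≥ 1 be integers and let a : ℕ^r → ℂ be rapidly decreasing. Then for every complex z with Re z > s one has Σ_{(n,m) ∈ ℕ^r × ℕ^s with |n|+|m| ≥ 1} a(n)·(|n|+|m|)^{−z} = Σ_{N=1}^{∞} N^{−z} · ( Σ_{n ∈ ℕ^r with |n| ≤ N} a(n)·C(N−|n|+s−1, s−1) ), where C(·,·) denotes the binomial coefficient, and both series converge absolutely. -/
/-!
There are `(t + |ι| - 1).choose (|ι| - 1) ≤ (t + 1) ^ (|ι| - 1)` functions `m : ι → ℕ` of degree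
`|m| = t`, so the weights `(1 + |m|) ^ (-σ)` are summable for `σ > |ι|`. As
`(|n| + |m|) ^ (-σ) ≤ 2 ^ σ * (1 + |m|) ^ (-σ)`, the double series is dominated by the product of
`∑ ‖a n‖` with this weight series. Absolute convergence then allows summing over the fibres of
`(n, m) ↦ |n| + |m|`, in which each `n` occurs as many times as there are `m` of degree `N - |n|`.
The same weight estimate, applied to the index set of `n`, shows that a rapidly decreasing `a` is
summable.
-/

section Regrouping

variable {α β γ : Type*}

theorem summable_comp_of_summable_card_mul {f : β → γ} {g : γ → ℝ}
    (hf : ∀ c, {b | f b = c}.Finite) (hg : ∀ c, 0 ≤ g c)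
    (h : Summable fun c ↦ (Nat.card {b // f b = c} : ℝ) * g c) :
    Summable fun b ↦ g (f b) := by
  refine (summable_partition (fun b ↦ hg (f b)) (s := fun c ↦ {b | f b = c})
    fun _ ↦ existsUnique_eq').2 ⟨fun c ↦ (hf c).summable (g ∘ f), h.congr fun c ↦ ?_⟩
  calc (Nat.card {b // f b = c} : ℝ) * g c
      = ∑' _ : {b | f b = c}, g c := by rw [tsum_const, nsmul_eq_mul, Set.coe_ofPred]
    _ = ∑' b : {b | f b = c}, g (f b) := tsum_congr fun b ↦ by rw [b.2]

theorem hasSum_mul_tsum_mul_card {𝕜 : Type*} [NormedField 𝕜] [CompleteSpace 𝕜]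
    (f : α → β → γ) {a : α → 𝕜} {h : γ → 𝕜}
    (hs : Summable fun p : α × β ↦ a p.1 * h (f p.1 p.2)) :
    HasSum (fun c ↦ h c * ∑' x, a x * Nat.card {y // f x y = c})
      (∑' p : α × β, a p.1 * h (f p.1 p.2)) := by
  refine (hs.hasSum.tsum_fiberwise (Function.uncurry f)).congr_fun fun c ↦ ?_
  rw [tsum_subtype _ (fun p : α × β ↦ a p.1 * h (f p.1 p.2)),
    (hs.indicator _).tsum_prod, ← tsum_mul_left]
  refine tsum_congr fun x ↦ ?_
  calc h c * (a x * Nat.card {y // f x y = c})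
      = ∑' _ : {y | f x y = c}, a x * h c := by
        rw [tsum_const, nsmul_eq_mul, Set.coe_ofPred]
        ring
    _ = ∑' y : {y | f x y = c}, a x * h (f x y) := tsum_congr fun y ↦ by rw [y.2]
    _ = ∑' y, (Function.uncurry f ⁻¹' {c}).indicator (fun p ↦ a p.1 * h (f p.1 p.2)) (x, y) :=
        tsum_subtype {y | f x y = c} fun y ↦ a x * h (f x y)

theorem tsum_one_le_eq_tsum {E : Type*} [AddCommMonoid E] [TopologicalSpace E] (d : β → ℕ)
    {f : β → E} (hf : ∀ b, d b = 0 → f b = 0) :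
    ∑' b : {b // 1 ≤ d b}, f b = ∑' b, f b :=
  tsum_subtype_eq_of_support_subset fun b hb ↦ Nat.one_le_iff_ne_zero.2 fun h ↦ hb (hf b h)

end Regrouping

section Compositions

open Finset

variable {ι : Type*} [Fintype ι]

theorem finite_setOf_sum_eq (t : ℕ) : {m : ι → ℕ | ∑ i, m i = t}.Finite := by
  classical
  exact (finite_toSet (piAntidiag univ t)).subset fun m (hm : ∑ i, m i = t) ↦ by simpa using hm

theorem card_sum_eq [Nonempty ι] (t : ℕ) :
    Nat.card {m : ι → ℕ // ∑ i, m i = t} =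
      (t + Fintype.card ι - 1).choose (Fintype.card ι - 1) := by
  classical
  have hfinsupp : {m : ι → ℕ // ∑ i, m i = t} ≃ (univ : Finset ι).finsuppAntidiag t :=
    Finsupp.equivFunOnFinite.symm.subtypeEquiv fun m ↦ by simp [mem_finsuppAntidiag]
  rw [Nat.card_congr hfinsupp, Nat.card_eq_fintype_card, Fintype.card_coe,
    card_finsuppAntidiag_nat_eq_choose, card_univ, add_comm t]
  have := Fintype.card_pos (α := ι)
  exact Nat.choose_symm_of_eq_add (by omega)

theorem card_sum_eq_le [Nonempty ι] (t : ℕ) :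
    Nat.card {m : ι → ℕ // ∑ i, m i = t} ≤ (t + 1) ^ (Fintype.card ι - 1) := by
  rw [card_sum_eq, Nat.add_sub_assoc Fintype.card_pos]
  exact Nat.choose_add_le_add_one_pow _ _

theorem card_add_sum_eq [Nonempty ι] (k N : ℕ) :
    Nat.card {m : ι → ℕ // k + ∑ i, m i = N} =
      if k ≤ N then (N - k + Fintype.card ι - 1).choose (Fintype.card ι - 1) else 0 := by
  split_ifs with hk
  · rw [← card_sum_eq]
    exact Nat.card_congr (Equiv.subtypeEquivRight fun m ↦ by omega)
  · have : IsEmpty {m : ι → ℕ // k + ∑ i, m i = N} := ⟨fun m ↦ by have := m.2; omega⟩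
    exact Nat.card_of_isEmpty

end Compositions

section Summability

variable {ι : Type*} [Fintype ι]

theorem summable_one_add_sum_rpow_neg {σ : ℝ} (hσ : Fintype.card ι < σ) :
    Summable fun m : ι → ℕ ↦ ((1 + ∑ i, m i : ℕ) : ℝ) ^ (-σ) := by
  cases isEmpty_or_nonempty ι
  · exact .of_finite
  have hseries : Summable fun t : ℕ ↦ ((t + 1 : ℕ) : ℝ) ^ ((Fintype.card ι - 1 : ℝ) - σ) :=
    (summable_nat_add_iff (f := fun t : ℕ ↦ (t : ℝ) ^ ((Fintype.card ι - 1 : ℝ) - σ)) 1).2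
      (Real.summable_nat_rpow.2 (by linarith))
  refine summable_comp_of_summable_card_mul (g := fun t ↦ ((1 + t : ℕ) : ℝ) ^ (-σ))
    finite_setOf_sum_eq (fun _ ↦ by positivity) (hseries.of_nonneg_of_le (fun _ ↦ by positivity) ?_)
  intro t
  calc (Nat.card {m : ι → ℕ // ∑ i, m i = t} : ℝ) * ((1 + t : ℕ) : ℝ) ^ (-σ)
      ≤ ((t + 1 : ℕ) : ℝ) ^ (Fintype.card ι - 1) * ((t + 1 : ℕ) : ℝ) ^ (-σ) := by
        rw [add_comm 1 t]
        gcongr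
        exact_mod_cast card_sum_eq_le t
    _ = ((t + 1 : ℕ) : ℝ) ^ ((Fintype.card ι - 1 : ℝ) - σ) := by
        rw [← Real.rpow_natCast, ← Real.rpow_add (by positivity), ← sub_eq_add_neg,
          Nat.cast_pred Fintype.card_pos]

theorem summable_of_one_add_sum_pow_mul_norm_le {E : Type*} [NormedAddCommGroup E]
    [CompleteSpace E] {a : (ι → ℕ) → E} {C : ℝ}
    (ha : ∀ n, ((1 + ∑ i, n i : ℕ) : ℝ) ^ (Fintype.card ι + 1) * ‖a n‖ ≤ C) :
    Summable a := by
  have hweight : Summable fun n : ι → ℕ ↦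
      ((1 + ∑ i, n i : ℕ) : ℝ) ^ (-((Fintype.card ι + 1 : ℕ) : ℝ)) :=
    summable_one_add_sum_rpow_neg (mod_cast Nat.lt_succ_self _)
  refine (hweight.mul_left C).of_norm_bounded fun n ↦ ?_
  rw [Real.rpow_neg (by positivity), Real.rpow_natCast, ← div_eq_mul_inv,
    le_div_iff₀' (by positivity)]
  exact ha n

theorem natCast_add_rpow_neg_le (u v : ℕ) {σ : ℝ} (hσ : 0 < σ) :
    ((u + v : ℕ) : ℝ) ^ (-σ) ≤ 2 ^ σ * ((1 + v : ℕ) : ℝ) ^ (-σ) := by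
  rcases Nat.eq_zero_or_pos (u + v) with huv | huv
  · -- Here `0 ^ (-σ)` takes the junk value `0`.
    rw [huv, Nat.cast_zero, Real.zero_rpow (neg_ne_zero.2 hσ.ne')]
    positivity
  have hhalf : ((1 + v : ℕ) : ℝ) / 2 ≤ (u + v : ℕ) := by
    rw [div_le_iff₀ two_pos]
    exact_mod_cast (by omega : 1 + v ≤ (u + v) * 2)
  calc ((u + v : ℕ) : ℝ) ^ (-σ) ≤ (((1 + v : ℕ) : ℝ) / 2) ^ (-σ) :=
        Real.rpow_le_rpow_of_nonpos (by positivity) hhalf (neg_nonpos.2 hσ.le)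
    _ = 2 ^ σ * ((1 + v : ℕ) : ℝ) ^ (-σ) := by
        rw [Real.div_rpow (by positivity) two_pos.le, Real.rpow_neg two_pos.le,
          div_inv_eq_mul, mul_comm]

theorem summable_mul_natCast_add_sum_cpow_neg {α : Type*} (w : α → ℕ) {a : α → ℂ}
    (ha : Summable a) {z : ℂ} (hz : Fintype.card ι < z.re) :
    Summable fun p : α × (ι → ℕ) ↦ a p.1 * ((w p.1 + ∑ i, p.2 i : ℕ) : ℂ) ^ (-z) := by
  have hz₀ : 0 < z.re := (Nat.cast_nonneg _).trans_lt hz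
  have hdom := (ha.norm.mul_of_nonneg (summable_one_add_sum_rpow_neg hz)
    (fun _ ↦ norm_nonneg _) fun m ↦ Real.rpow_nonneg (Nat.cast_nonneg _) _).mul_left (2 ^ z.re)
  refine hdom.of_norm_bounded fun ⟨x, m⟩ ↦ ?_
  rw [norm_mul, Complex.norm_natCast_cpow_of_re_ne_zero _ (by simpa using hz₀.ne'),
    Complex.neg_re, mul_left_comm]
  gcongr
  exact natCast_add_rpow_neg_le _ _ hz₀

end Summability

theorem xi_eq_dirichlet_series_general {α ι : Type*} [Fintype ι] [Nonempty ι] (w : α → ℕ)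
    {a : α → ℂ} (ha : Summable a) {z : ℂ} (hz : Fintype.card ι < z.re) :
    Summable (fun x : {x : α × (ι → ℕ) // 1 ≤ w x.1 + ∑ i, x.2 i} ↦
      ‖a x.val.1 * ((w x.val.1 + ∑ i, x.val.2 i : ℕ) : ℂ) ^ (-z)‖) ∧
    Summable (fun N : {N : ℕ // 1 ≤ N} ↦
      ‖((N : ℕ) : ℂ) ^ (-z) * ∑' n, if w n ≤ N then
        a n * ((N - w n + Fintype.card ι - 1).choose (Fintype.card ι - 1) : ℕ) else 0‖) ∧
    ∑' x : {x : α × (ι → ℕ) // 1 ≤ w x.1 + ∑ i, x.2 i},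
        a x.val.1 * ((w x.val.1 + ∑ i, x.val.2 i : ℕ) : ℂ) ^ (-z) =
      ∑' N : {N : ℕ // 1 ≤ N}, ((N : ℕ) : ℂ) ^ (-z) * ∑' n, if w n ≤ N then
        a n * ((N - w n + Fintype.card ι - 1).choose (Fintype.card ι - 1) : ℕ) else 0 := by
  have hz₀ : z ≠ 0 := fun h ↦ (Nat.cast_nonneg _).not_gt (hz.trans_eq (by rw [h, Complex.zero_re]))
  have hpow : ((0 : ℕ) : ℂ) ^ (-z) = 0 := by
    rw [Nat.cast_zero, Complex.zero_cpow (neg_ne_zero.2 hz₀)]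
  have hpairs := summable_mul_natCast_add_sum_cpow_neg (ι := ι) w ha hz
  have hseries := hasSum_mul_tsum_mul_card (fun x (m : ι → ℕ) ↦ w x + ∑ i, m i)
    (h := fun N : ℕ ↦ (N : ℂ) ^ (-z)) hpairs
  simp only [card_add_sum_eq, Nat.cast_ite, Nat.cast_zero, mul_ite, mul_zero] at hseries
  have hpairs_zero (x : α × (ι → ℕ)) (hx : w x.1 + ∑ i, x.2 i = 0) :
      a x.1 * ((w x.1 + ∑ i, x.2 i : ℕ) : ℂ) ^ (-z) = 0 := by rw [hx, hpow, mul_zero]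
  refine ⟨(hpairs.subtype _).norm, (hseries.summable.subtype _).norm, ?_⟩
  rw [tsum_one_le_eq_tsum _ hpairs_zero, ← hseries.tsum_eq]
  exact (tsum_one_le_eq_tsum id fun N (hN : N = 0) ↦ by rw [hN, hpow, zero_mul]).symm

/-- For `r ≥ 0`, `s ≥ 1` and rapidly decreasing `a : ℕ^r → ℂ`, for every `z` with `Re z > s`:
`Σ_{(n,m), |n|+|m| ≥ 1} a(n)·(|n|+|m|)^{−z}
  = Σ_{N=1}^∞ N^{−z}·(Σ_{|n| ≤ N} a(n)·C(N−|n|+s−1, s−1))`,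
and both series converge absolutely. -/
theorem xi_eq_dirichlet_series (r s : ℕ) (hs : 1 ≤ s) (a : (Fin r → ℕ) → ℂ)
    (ha : ∀ p : ℕ, ∃ C : ℝ, ∀ n : Fin r → ℕ,
      ((1 + ∑ i, n i : ℕ) : ℝ) ^ p * ‖a n‖ ≤ C) :
    ∀ z : ℂ, (s : ℝ) < z.re →
      Summable (fun x : {x : (Fin r → ℕ) × (Fin s → ℕ) // 1 ≤ (∑ i, x.1 i) + ∑ i, x.2 i} =>
        ‖a x.val.1 * ((((∑ i, x.val.1 i) + ∑ i, x.val.2 i : ℕ) : ℂ)) ^ (-z)‖) ∧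
      Summable (fun N : {N : ℕ // 1 ≤ N} =>
        ‖((N : ℕ) : ℂ) ^ (-z) * ∑' n : Fin r → ℕ,
            (if (∑ i, n i) ≤ (N : ℕ) then
              a n * ((((N : ℕ) - ∑ i, n i + s - 1).choose (s - 1) : ℕ) : ℂ)
            else 0)‖) ∧
      (∑' x : {x : (Fin r → ℕ) × (Fin s → ℕ) // 1 ≤ (∑ i, x.1 i) + ∑ i, x.2 i},
          a x.val.1 * ((((∑ i, x.val.1 i) + ∑ i, x.val.2 i : ℕ) : ℂ)) ^ (-z))
        = ∑' N : {N : ℕ // 1 ≤ N},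
            ((N : ℕ) : ℂ) ^ (-z) * ∑' n : Fin r → ℕ,
              (if (∑ i, n i) ≤ (N : ℕ) then
                a n * ((((N : ℕ) - ∑ i, n i + s - 1).choose (s - 1) : ℕ) : ℂ)
              else 0) := by
  intro z hz
  obtain ⟨C, hC⟩ := ha (Fintype.card (Fin r) + 1)
  have := Fin.pos_iff_nonempty.1 hs
  simpa only [Fintype.card_fin] using xi_eq_dirichlet_series_general (ι := Fin s)
    (fun n ↦ ∑ i, n i) (summable_of_one_add_sum_pow_mul_norm_le hC) (by rwa [Fintype.card_fin])
end

section
/- Let R be a unital ring and let a, b ∈ R satisfy a·b = 1, and put p = 1 − b·a. Then p² = p, a·p = 0, p·b = 0, and for all natural numbers k and r one has p·a^k·b^r·p = p if k = r, and p·a^k·b^r·p = 0 if k ≠ r. -/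
/-!
Cancelling `a * b = 1` repeatedly in `a ^ k * b ^ r` leaves a pure power of `a` or of `b`.
Between two copies of `p = 1 - b * a`, a positive power of `a` is killed by `a * p = 0` and a
positive power of `b` by `p * b = 0`, so a nonzero contribution requires `k = r`.
-/

section Monoid

variable {M : Type*} [Monoid M] {a b : M}

theorem isIdempotentElem_mul_of_mul_eq_one (hab : a * b = 1) : IsIdempotentElem (b * a) := by
  rw [IsIdempotentElem, mul_assoc, ← mul_assoc a, hab, one_mul]

theorem pow_mul_pow_eq_pow_sub_right (hab : a * b = 1) {k r : ℕ} (hkr : k ≤ r) :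
    a ^ k * b ^ r = b ^ (r - k) := by
  rw [← pow_mul_pow_sub b hkr, ← mul_assoc, pow_mul_pow_eq_one k hab, one_mul]

theorem pow_mul_pow_eq_pow_sub_left (hab : a * b = 1) {k r : ℕ} (hrk : r ≤ k) :
    a ^ k * b ^ r = a ^ (k - r) := by
  rw [← pow_sub_mul_pow a hrk, mul_assoc, pow_mul_pow_eq_one r hab, mul_one]

theorem mul_pow_mul_pow_mul_self (hab : a * b = 1) {p : M} (hp : IsIdempotentElem p) (n : ℕ) :
    p * a ^ n * b ^ n * p = p := by
  rw [mul_assoc p, pow_mul_pow_eq_one n hab, mul_one, hp.eq]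

end Monoid

section MonoidWithZero

variable {M : Type*} [MonoidWithZero M] {a b p : M}

theorem mul_pow_eq_zero_of_mul_eq_zero (hpb : p * b = 0) {n : ℕ} (hn : n ≠ 0) :
    p * b ^ n = 0 := by
  rw [← mul_pow_sub_one hn, ← mul_assoc, hpb, zero_mul]

theorem pow_mul_eq_zero_of_mul_eq_zero (hap : a * p = 0) {n : ℕ} (hn : n ≠ 0) :
    a ^ n * p = 0 := by
  rw [← pow_sub_one_mul hn, mul_assoc, hap, mul_zero]

theorem mul_pow_mul_pow_mul_eq_zero (hab : a * b = 1) (hap : a * p = 0) (hpb : p * b = 0)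
    {k r : ℕ} (hkr : k ≠ r) : p * a ^ k * b ^ r * p = 0 := by
  rw [mul_assoc p]
  obtain hlt | hlt := hkr.lt_or_gt
  · rw [pow_mul_pow_eq_pow_sub_right hab hlt.le,
      mul_pow_eq_zero_of_mul_eq_zero hpb (Nat.sub_ne_zero_of_lt hlt), zero_mul]
  · rw [pow_mul_pow_eq_pow_sub_left hab hlt.le, mul_assoc,
      pow_mul_eq_zero_of_mul_eq_zero hap (Nat.sub_ne_zero_of_lt hlt), mul_zero]

end MonoidWithZero

section Ring

variable {R : Type*} [Ring R] {a b : R}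

theorem mul_one_sub_mul_eq_zero (hab : a * b = 1) : a * (1 - b * a) = 0 := by
  rw [mul_one_sub, ← mul_assoc, hab, one_mul, sub_self]

theorem one_sub_mul_mul_eq_zero (hab : a * b = 1) : (1 - b * a) * b = 0 := by
  rw [one_sub_mul, mul_assoc, hab, mul_one, sub_self]

end Ring

/-- In a unital ring, if `a * b = 1` and `p = 1 - b * a`, then `p` is an idempotent with
`a * p = 0`, `p * b = 0`, and `p * a^k * b^r * p` equals `p` when `k = r` and `0` when `k ≠ r`. -/
theorem defect_projection_relations (R : Type*) [Ring R] (a b : R) (hab : a * b = 1) :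
    (1 - b * a) * (1 - b * a) = 1 - b * a ∧
    a * (1 - b * a) = 0 ∧
    (1 - b * a) * b = 0 ∧
    ∀ k r : ℕ,
      (k = r → (1 - b * a) * a ^ k * b ^ r * (1 - b * a) = 1 - b * a) ∧
      (k ≠ r → (1 - b * a) * a ^ k * b ^ r * (1 - b * a) = 0) := by
  have hp : IsIdempotentElem (1 - b * a) := (isIdempotentElem_mul_of_mul_eq_one hab).one_sub
  have hap : a * (1 - b * a) = 0 := mul_one_sub_mul_eq_zero hab
  have hpb : (1 - b * a) * b = 0 := one_sub_mul_mul_eq_zero hab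
  refine ⟨hp.eq, hap, hpb, fun k r => ⟨?_, mul_pow_mul_pow_mul_eq_zero hab hap hpb⟩⟩
  rintro rfl
  exact mul_pow_mul_pow_mul_self hab hp k
end

section
/- Let f and g be continuous complex-valued functions on the circle 𝕋. If the operator M_f·P₀ + M_g·(1−P₀) on L²(𝕋) is compact, then f = 0 and g = 0. -/
open MeasureTheory

/-!
A compact operator maps the weakly null families `(e_n)_{n ≥ 0}` and `(e_n)_{n < 0}` to norm-null
ones. On the first `M_f P₀ + M_g (1 - P₀)` acts as `M_f`, on the second as `M_g`. Since `|e_n| = 1`,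
the norm `‖M_f e_n‖ = ‖f‖₂` does not depend on `n`, so it can only tend to `0` if `f = 0`; likewise
for `g`.
-/

open Filter Topology Bornology

section WeakConvergence

variable {ι 𝕜 E F : Type*}

theorem tendsto_apply_of_isCompactOperator_of_isVonNBounded [NontriviallyNormedField 𝕜]
    [TopologicalSpace E] [AddCommGroup E] [Module 𝕜 E]
    [TopologicalSpace F] [AddCommGroup F] [Module 𝕜 F] [ContinuousConstSMul 𝕜 F]
    [SeparatingDual 𝕜 F] {A : E →L[𝕜] F} (hA : IsCompactOperator A)
    {l : Filter ι} {x : ι → E} {a : E} (hx : IsVonNBounded 𝕜 (Set.range x))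
    (hweak : ∀ φ : StrongDual 𝕜 E, Tendsto (fun i => φ (x i)) l (𝓝 (φ a))) :
    Tendsto (fun i => A (x i)) l (𝓝 (A a)) := by
  obtain ⟨K, hK, hAK⟩ := hA.image_subset_compact_of_isVonNBounded hx
  have hmem (i : ι) : A (x i) ∈ K := hAK ⟨x i, ⟨i, rfl⟩, rfl⟩
  refine hK.tendsto_nhds_of_unique_mapClusterPt (.of_forall hmem) fun y _ hy => ?_
  rw [SeparatingDual.eq_iff_forall_dual_eq (R := 𝕜)]
  intro φ
  have hφy : MapClusterPt (φ y) l (fun i => φ (A (x i))) :=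
    hy.continuousAt_comp φ.continuous.continuousAt
  have hφA : Tendsto (fun i => φ (A (x i))) l (𝓝 (φ (A a))) := hweak (φ.comp A)
  exact eq_of_nhds_neBot (hφy.clusterPt.mono hφA)

theorem tendsto_inner_orthonormal_cofinite_zero [RCLike 𝕜] [SeminormedAddCommGroup E]
    [InnerProductSpace 𝕜 E] {e : ι → E} (he : Orthonormal 𝕜 e) (v : E) :
    Tendsto (fun i => inner 𝕜 v (e i)) cofinite (𝓝 0) := by
  have hsq := (he.inner_products_summable v).tendsto_cofinite_zero.sqrt
  simp only [Real.sqrt_sq (norm_nonneg _), Real.sqrt_zero, norm_inner_symm _ v] at hsq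
  exact tendsto_zero_iff_norm_tendsto_zero.2 hsq

theorem isBounded_range_of_orthonormal [RCLike 𝕜] [SeminormedAddCommGroup E]
    [InnerProductSpace 𝕜 E] {e : ι → E} (he : Orthonormal 𝕜 e) : IsBounded (Set.range e) :=
  isBounded_iff_forall_norm_le.2 ⟨1, Set.forall_mem_range.2 fun i => (he.1 i).le⟩

theorem tendsto_apply_orthonormal_cofinite_zero_of_isCompactOperator [RCLike 𝕜]
    [NormedAddCommGroup E] [InnerProductSpace 𝕜 E] [CompleteSpace E]
    [TopologicalSpace F] [AddCommGroup F] [Module 𝕜 F] [ContinuousConstSMul 𝕜 F]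
    [SeparatingDual 𝕜 F] {A : E →L[𝕜] F} (hA : IsCompactOperator A)
    {e : ι → E} (he : Orthonormal 𝕜 e) : Tendsto (fun i => A (e i)) cofinite (𝓝 0) := by
  rw [← map_zero A]
  refine tendsto_apply_of_isCompactOperator_of_isVonNBounded hA (a := 0)
    (NormedSpace.isVonNBounded_iff 𝕜 |>.2 <| isBounded_range_of_orthonormal he) fun φ => ?_
  simpa using tendsto_inner_orthonormal_cofinite_zero he ((InnerProductSpace.toDual 𝕜 E).symm φ)

end WeakConvergence

section Multiplication

variable {ι 𝕜 α : Type*} [MeasurableSpace α] {μ : Measure α}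

theorem ae_eq_zero_of_tendsto_Lp_zero_of_ae_norm_eq {E F : Type*} [NormedAddCommGroup E]
    [NormedAddCommGroup F] {p : ENNReal} [Fact (1 ≤ p)] {l : Filter ι} [l.NeBot]
    {u : ι → Lp E p μ} {f : α → F} (hu : Tendsto u l (𝓝 0))
    (hf : ∀ i, ∀ᵐ x ∂μ, ‖u i x‖ = ‖f x‖) : f =ᵐ[μ] 0 := by
  obtain ⟨i⟩ : Nonempty ι := l.nonempty_of_neBot
  have hle (j : ι) : ‖u i‖ ≤ ‖u j‖ := Lp.norm_le_norm_of_ae_le <| by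
    filter_upwards [hf i, hf j] with x hi hj
    rw [hi, hj]
  have hui : u i = 0 :=
    norm_le_zero_iff.1 <| ge_of_tendsto' (tendsto_zero_iff_norm_tendsto_zero.1 hu) hle
  filter_upwards [hf i, hui ▸ Lp.coeFn_zero E p μ] with x hx hx0
  simpa [hx0, eq_comm] using hx

theorem ae_eq_zero_of_isCompactOperator_of_orthonormal [RCLike 𝕜] [Infinite ι] {f : α → 𝕜}
    {A : Lp 𝕜 2 μ →L[𝕜] Lp 𝕜 2 μ} (hA : IsCompactOperator A)
    {e : ι → Lp 𝕜 2 μ} (he : Orthonormal 𝕜 e) (hnorm : ∀ i, ∀ᵐ x ∂μ, ‖e i x‖ = 1)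
    (hAe : ∀ i, A (e i) =ᵐ[μ] fun x => f x * e i x) : f =ᵐ[μ] 0 := by
  refine ae_eq_zero_of_tendsto_Lp_zero_of_ae_norm_eq
    (tendsto_apply_orthonormal_cofinite_zero_of_isCompactOperator hA he) fun i => ?_
  filter_upwards [hAe i, hnorm i] with x hx hx1
  rw [hx, norm_mul, hx1, mul_one]

theorem eq_zero_of_compact_hardy_combination_general [RCLike 𝕜] {f g : α → 𝕜}
    {e : ι → Lp 𝕜 2 μ} (he : Orthonormal 𝕜 e) (hnorm : ∀ i, ∀ᵐ x ∂μ, ‖e i x‖ = 1)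
    {S : Set ι} (hS : S.Infinite) (hSc : Sᶜ.Infinite) {P Mf Mg : Lp 𝕜 2 μ →L[𝕜] Lp 𝕜 2 μ}
    (hP : ∀ i, P (e i) = S.indicator e i)
    (hMf : ∀ u, Mf u =ᵐ[μ] fun x => f x * u x)
    (hMg : ∀ u, Mg u =ᵐ[μ] fun x => g x * u x)
    (hcpt : IsCompactOperator ⇑(Mf * P + Mg * (1 - P))) :
    f =ᵐ[μ] 0 ∧ g =ᵐ[μ] 0 := by
  have := hS.to_subtype
  have := hSc.to_subtype
  have he_mem (i : S) : (Mf * P + Mg * (1 - P)) (e i) = Mf (e i) := by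
    simp [hP]
  have he_compl (i : ↥Sᶜ) : (Mf * P + Mg * (1 - P)) (e i) = Mg (e i) := by
    simp [hP, Set.indicator_of_notMem i.2]
  constructor
  · exact ae_eq_zero_of_isCompactOperator_of_orthonormal (e := fun i : S => e i) hcpt
      (he.comp _ Subtype.val_injective) (fun i => hnorm i) fun i => he_mem i ▸ hMf (e i)
  · exact ae_eq_zero_of_isCompactOperator_of_orthonormal (e := fun i : ↥Sᶜ => e i) hcpt
      (he.comp _ Subtype.val_injective) (fun i => hnorm i) fun i => he_compl i ▸ hMg (e i)

end Multiplication

theorem ae_norm_fourierBasis_eq_one {T : ℝ} [Fact (0 < T)] (n : ℤ) :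
    ∀ᵐ x ∂(AddCircle.haarAddCircle (T := T)), ‖fourierBasis (T := T) n x‖ = 1 := by
  rw [coe_fourierBasis]
  filter_upwards [coeFn_fourierLp (T := T) 2 n] with x hx
  rw [hx, fourier_apply, Circle.norm_coe]

/-- Let `f, g` be continuous functions on the circle, `P₀` the orthogonal projection of
`L²(𝕋)` onto the closed span of the characters `e_n`, `n ≥ 0` (characterized by its action on
the Fourier basis), and `M_f, M_g` the multiplication operators. If `M_f·P₀ + M_g·(1−P₀)` is
compact, then `f = 0` and `g = 0`. -/
theorem eq_zero_of_compact_hardy_combination (T : ℝ) [hT : Fact (0 < T)]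
    (f g : C(AddCircle T, ℂ))
    (P₀ Mf Mg : Lp ℂ 2 (@AddCircle.haarAddCircle T hT)
      →L[ℂ] Lp ℂ 2 (@AddCircle.haarAddCircle T hT))
    (hP : ∀ n : ℤ, P₀ (fourierBasis n) = if 0 ≤ n then fourierBasis n else 0)
    (hMf : ∀ u : Lp ℂ 2 (@AddCircle.haarAddCircle T hT),
      (Mf u : AddCircle T → ℂ) =ᵐ[@AddCircle.haarAddCircle T hT] fun x => f x * u x)
    (hMg : ∀ u : Lp ℂ 2 (@AddCircle.haarAddCircle T hT),
      (Mg u : AddCircle T → ℂ) =ᵐ[@AddCircle.haarAddCircle T hT] fun x => g x * u x)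
    (hcpt : IsCompactOperator ⇑(Mf * P₀ + Mg * (1 - P₀))) :
    f = 0 ∧ g = 0 := by
  have hpos : (Set.Ici (0 : ℤ)).Infinite := Set.Ici_infinite 0
  have hneg : (Set.Ici (0 : ℤ))ᶜ.Infinite := by
    simpa only [Set.compl_Ici] using Set.Iio_infinite (0 : ℤ)
  have hP_indicator (n : ℤ) : P₀ (fourierBasis n) = (Set.Ici 0).indicator fourierBasis n := by
    simpa only [Set.indicator_apply, Set.mem_Ici] using hP n
  obtain ⟨hf, hg⟩ := eq_zero_of_compact_hardy_combination_general fourierBasis.orthonormal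
    ae_norm_fourierBasis_eq_one hpos hneg hP_indicator hMf hMg hcpt
  exact ⟨DFunLike.coe_injective (f.continuous.ae_eq_iff_eq _ continuous_zero |>.1 hf),
    DFunLike.coe_injective (g.continuous.ae_eq_iff_eq _ continuous_zero |>.1 hg)⟩
end

section
/- Every compact operator on ℓ²(ℤ) belongs to the smallest closed star-subalgebra of the algebra of bounded operators on ℓ²(ℤ) that contains the bilateral shift W and the operator F₀. -/
/-- The standard orthonormal basis vector `e_k` of `ℓ²(ℤ)`. -/
noncomputable def ellTwoZBasis (k : ℤ) : lp (fun _ : ℤ => ℂ) 2 := lp.single 2 k 1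

/-!
The commutator `F₀ W - W F₀` kills every `e_k` except `e_{-1}`, which it sends to `2 e_0`, so the
algebra contains the rank one operator `⟨e_{-1}, ·⟩ e_0`. Multiplying by `W` and `W*` and taking
adjoints yields all matrix units, whose closed linear span contains all rank one operators, hence
all compact ones.
-/

open InnerProductSpace ContinuousLinearMap

section CompactOperators

variable {𝕜 E F : Type*} [RCLike 𝕜] [NormedAddCommGroup F] [InnerProductSpace 𝕜 F]

theorem exists_finiteDimensional_norm_sub_starProjection_lt {s : Set F} (hs : TotallyBounded s)
    {ε : ℝ} (hε : 0 < ε) :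
    ∃ (V : Submodule 𝕜 F) (_ : FiniteDimensional 𝕜 V),
      ∀ x ∈ s, ‖x - V.starProjection x‖ < ε := by
  obtain ⟨t, ht, hst⟩ := Metric.totallyBounded_iff.1 hs ε hε
  have : FiniteDimensional 𝕜 (Submodule.span 𝕜 t) := .span_of_finite 𝕜 ht
  refine ⟨Submodule.span 𝕜 t, this, fun x hx => ?_⟩
  obtain ⟨y, hy, hxy⟩ := Set.mem_iUnion₂.1 (hst hx)
  calc ‖x - (Submodule.span 𝕜 t).starProjection x‖
      = ⨅ v : Submodule.span 𝕜 t, ‖x - v‖ := Submodule.starProjection_minimal x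
    _ ≤ ‖x - y‖ :=
        ciInf_le ⟨0, Set.forall_mem_range.2 fun _ => norm_nonneg _⟩
          (⟨y, Submodule.subset_span hy⟩ : Submodule.span 𝕜 t)
    _ < ε := mem_ball_iff_norm.1 hxy

theorem exists_finiteDimensional_norm_sub_starProjection_comp_lt [SeminormedAddCommGroup E]
    [NormedSpace 𝕜 E] {K : E →L[𝕜] F} (hK : IsCompactOperator K) {ε : ℝ} (hε : 0 < ε) :
    ∃ (V : Submodule 𝕜 F) (_ : FiniteDimensional 𝕜 V), ‖K - V.starProjection ∘L K‖ < ε := by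
  have hball : TotallyBounded (K '' Metric.closedBall 0 1) :=
    (hK.isCompact_closure_image_closedBall 1).totallyBounded.subset subset_closure
  obtain ⟨V, hV, hnear⟩ :=
    exists_finiteDimensional_norm_sub_starProjection_lt (𝕜 := 𝕜) hball (half_pos hε)
  refine ⟨V, hV, (opNorm_le_of_unit_norm (half_pos hε).le fun x hx => ?_).trans_lt
    (half_lt_self hε)⟩
  exact (hnear (K x) (Set.mem_image_of_mem K (by simp [hx]))).le

variable [NormedAddCommGroup E] [InnerProductSpace 𝕜 E] [CompleteSpace E] [CompleteSpace F]
  {S : Submodule 𝕜 (E →L[𝕜] F)}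

theorem starProjection_comp_mem_of_rankOne_mem (hS : ∀ x y, rankOne 𝕜 x y ∈ S)
    (V : Submodule 𝕜 F) [FiniteDimensional 𝕜 V] (T : E →L[𝕜] F) : V.starProjection ∘L T ∈ S := by
  rw [(stdOrthonormalBasis 𝕜 V).starProjection_eq_sum_rankOne, finsetSum_comp]
  refine sum_mem fun i _ => ?_
  rw [rankOne_comp]
  exact hS _ _

theorem mem_of_isCompactOperator_of_rankOne_mem (hclosed : IsClosed (S : Set (E →L[𝕜] F)))
    (hS : ∀ x y, rankOne 𝕜 x y ∈ S) {K : E →L[𝕜] F} (hK : IsCompactOperator K) : K ∈ S := by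
  refine hclosed.closure_subset (Metric.mem_closure_iff.2 fun ε hε => ?_)
  obtain ⟨V, _, hV⟩ := exists_finiteDimensional_norm_sub_starProjection_comp_lt hK hε
  exact ⟨V.starProjection ∘L K, starProjection_comp_mem_of_rankOne_mem hS V K,
    (dist_eq_norm _ _).trans_lt hV⟩

end CompactOperators

theorem apply_mem_of_dense_span {R R₂ X Y : Type*} [Semiring R] [Semiring R₂]
    {σ : R →+* R₂} [RingHomSurjective σ]
    [AddCommMonoid X] [Module R X] [TopologicalSpace X]
    [AddCommMonoid Y] [Module R₂ Y] [TopologicalSpace Y]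
    {s : Set X} (hs : Dense (Submodule.span R s : Set X)) {S : Submodule R₂ Y}
    (hS : IsClosed (S : Set Y)) (T : X →SL[σ] Y) (hT : ∀ x ∈ s, T x ∈ S) (x : X) : T x ∈ S :=
  closure_minimal (Submodule.span_le (p := S.comap T.toLinearMap).2 hT)
    (hS.preimage T.continuous) (hs x)

theorem rankOne_mem_of_dense_span {𝕜 E F : Type*} [RCLike 𝕜] [SeminormedAddCommGroup E]
    [InnerProductSpace 𝕜 E] [SeminormedAddCommGroup F] [InnerProductSpace 𝕜 F]
    {s : Set F} {t : Set E}
    (hs : Dense (Submodule.span 𝕜 s : Set F)) (ht : Dense (Submodule.span 𝕜 t : Set E))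
    {S : Submodule 𝕜 (E →L[𝕜] F)} (hclosed : IsClosed (S : Set (E →L[𝕜] F)))
    (hS : ∀ x ∈ s, ∀ y ∈ t, rankOne 𝕜 x y ∈ S) (x : F) (y : E) : rankOne 𝕜 x y ∈ S := by
  have hleft : ∀ x ∈ s, rankOne 𝕜 x y ∈ S := fun x hx =>
    apply_mem_of_dense_span ht hclosed (rankOne 𝕜 x) (hS x hx) y
  exact apply_mem_of_dense_span hs hclosed
    ((rankOne 𝕜 : F →L[𝕜] E →L⋆[𝕜] E →L[𝕜] F).flip y) hleft x

section HilbertBasis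

variable {𝕜 E F ι κ : Type*} [RCLike 𝕜] [NormedAddCommGroup E] [InnerProductSpace 𝕜 E]
  [NormedAddCommGroup F] [InnerProductSpace 𝕜 F]

theorem dense_span_range_hilbertBasis (b : HilbertBasis ι 𝕜 E) :
    Dense (Submodule.span 𝕜 (Set.range b) : Set E) :=
  Submodule.dense_iff_topologicalClosure_eq_top.2 b.dense_span

theorem adjoint_apply_of_map_hilbertBasis [CompleteSpace E] [CompleteSpace F]
    (b : HilbertBasis ι 𝕜 E) {v : κ → F} (hv : Orthonormal 𝕜 v) (σ : ι ≃ κ) {T : E →L[𝕜] F}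
    (hT : ∀ i, T (b i) = v (σ i)) (j : κ) : adjoint T (v j) = b (σ.symm j) := by
  classical
  refine b.repr.injective (lp.ext (funext fun i => ?_))
  rw [b.repr_apply_apply, b.repr_apply_apply, adjoint_inner_right, hT,
    orthonormal_iff_ite.1 hv, orthonormal_iff_ite.1 b.orthonormal]
  simp only [Equiv.eq_symm_apply]

end HilbertBasis

section ShiftSign

variable {𝕜 E : Type*} [RCLike 𝕜] [NormedAddCommGroup E] [InnerProductSpace 𝕜 E]

theorem sign_mul_shift_sub_shift_mul_sign (b : HilbertBasis ℤ 𝕜 E) {W F₀ : E →L[𝕜] E}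
    (hW : ∀ k, W (b k) = b (k + 1)) (hF : ∀ k, F₀ (b k) = if 0 ≤ k then b k else -b k) :
    F₀ * W - W * F₀ = (2 : 𝕜) • rankOne 𝕜 (b 0) (b (-1)) := by
  refine ext_on (dense_span_range_hilbertBasis b) (Set.forall_mem_range.2 fun k => ?_)
  simp only [sub_apply, mul_apply_eq_comp, smul_apply, rankOne_apply, hW, hF,
    orthonormal_iff_ite.1 b.orthonormal]
  obtain hk | rfl | hk : k < -1 ∨ k = -1 ∨ 0 ≤ k := by lia
  · simp [hW, show ¬ 0 ≤ k + 1 by lia, show ¬ 0 ≤ k by lia, show -1 ≠ k by lia]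
  · simp [hW, two_smul]
  · simp [hW, show 0 ≤ k + 1 by lia, hk, show -1 ≠ k by lia]

variable [CompleteSpace E] {M : StarSubalgebra 𝕜 (E →L[𝕜] E)}

theorem rankOne_mem_of_rankOne_right_mem {x y z : E} (hz : ‖z‖ = 1)
    (hx : rankOne 𝕜 x z ∈ M) (hy : rankOne 𝕜 y z ∈ M) : rankOne 𝕜 x y ∈ M := by
  have hmul : rankOne 𝕜 x z * star (rankOne 𝕜 y z) = rankOne 𝕜 x y := by
    simp [star_eq_adjoint, mul_def, rankOne_comp_rankOne, hz]
  exact hmul ▸ mul_mem hx (star_mem hy)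

theorem rankOne_hilbertBasis_mem_of_shift_mem (b : HilbertBasis ℤ 𝕜 E) {W : E →L[𝕜] E}
    (hW : ∀ k, W (b k) = b (k + 1)) (hWM : W ∈ M) {m n : ℤ} (hmn : rankOne 𝕜 (b m) (b n) ∈ M)
    (j k : ℤ) : rankOne 𝕜 (b j) (b k) ∈ M := by
  have hWadj : ∀ k, adjoint W (b k) = b (k - 1) :=
    adjoint_apply_of_map_hilbertBasis b b.orthonormal (Equiv.addRight 1) hW
  have hcol (j : ℤ) : rankOne 𝕜 (b j) (b n) ∈ M := by
    induction j using Int.inductionOn' (b := m) with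
    | zero => exact hmn
    | succ i _ ih => simpa only [mul_def, comp_rankOne, hW] using mul_mem hWM ih
    | pred i _ ih =>
      simpa only [star_eq_adjoint, mul_def, comp_rankOne, hWadj] using mul_mem (star_mem hWM) ih
  exact rankOne_mem_of_rankOne_right_mem (b.orthonormal.norm_eq_one n) (hcol j) (hcol k)

theorem rankOne_hilbertBasis_mem_of_shift_sign_mem (b : HilbertBasis ℤ 𝕜 E) {W F₀ : E →L[𝕜] E}
    (hW : ∀ k, W (b k) = b (k + 1)) (hF : ∀ k, F₀ (b k) = if 0 ≤ k then b k else -b k)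
    (hWM : W ∈ M) (hFM : F₀ ∈ M) (j k : ℤ) : rankOne 𝕜 (b j) (b k) ∈ M := by
  refine rankOne_hilbertBasis_mem_of_shift_mem b hW hWM (m := 0) (n := -1) ?_ j k
  have hcomm := sub_mem (mul_mem hFM hWM) (mul_mem hWM hFM)
  rw [sign_mul_shift_sub_shift_mul_sign b hW hF] at hcomm
  exact (M.toSubalgebra.toSubmodule.smul_mem_iff two_ne_zero).1 hcomm

theorem compact_mem_closed_star_algebra_shift_sign_general (b : HilbertBasis ℤ 𝕜 E)
    {W F₀ : E →L[𝕜] E} (hW : ∀ k, W (b k) = b (k + 1))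
    (hF : ∀ k, F₀ (b k) = if 0 ≤ k then b k else -b k) {K : E →L[𝕜] E}
    (hK : IsCompactOperator K) :
    K ∈ (StarAlgebra.adjoin 𝕜 ({W, F₀} : Set (E →L[𝕜] E))).topologicalClosure := by
  set A := StarAlgebra.adjoin 𝕜 ({W, F₀} : Set (E →L[𝕜] E))
  have hgen : {W, F₀} ⊆ (A : Set (E →L[𝕜] E)) := StarAlgebra.subset_adjoin 𝕜 _
  have hunits (j k : ℤ) : rankOne 𝕜 (b j) (b k) ∈ A :=
    rankOne_hilbertBasis_mem_of_shift_sign_mem b hW hF (hgen (by simp)) (hgen (by simp)) j k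
  have hclosed := A.isClosed_topologicalClosure
  have hrankOne (x y : E) : rankOne 𝕜 x y ∈ A.topologicalClosure :=
    rankOne_mem_of_dense_span (S := A.topologicalClosure.toSubalgebra.toSubmodule)
      (dense_span_range_hilbertBasis b) (dense_span_range_hilbertBasis b) hclosed
      (Set.forall_mem_range.2 fun j => Set.forall_mem_range.2 fun k =>
        A.le_topologicalClosure (hunits j k)) x y
  exact mem_of_isCompactOperator_of_rankOne_mem
    (S := A.topologicalClosure.toSubalgebra.toSubmodule) hclosed hrankOne hK

end ShiftSign

/-- `ellTwoZBasis` as a Hilbert basis: `ℓ²(ℤ)` is its own coordinate space. -/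
noncomputable def ellTwoZHilbertBasis : HilbertBasis ℤ ℂ (lp (fun _ : ℤ => ℂ) 2) :=
  .ofRepr (.refl ℂ _)

theorem coe_ellTwoZHilbertBasis : ⇑ellTwoZHilbertBasis = ellTwoZBasis :=
  funext fun k => (ellTwoZHilbertBasis.repr_symm_single k).symm

/-- Every compact operator on `ℓ²(ℤ)` belongs to the smallest closed star-subalgebra of the
bounded operators containing the bilateral shift `W` and the sign operator `F₀`. -/
theorem compact_mem_closed_star_algebra_shift_sign
    (W F₀ : lp (fun _ : ℤ => ℂ) 2 →L[ℂ] lp (fun _ : ℤ => ℂ) 2)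
    (hW : ∀ k : ℤ, W (ellTwoZBasis k) = ellTwoZBasis (k + 1))
    (hF : ∀ k : ℤ, F₀ (ellTwoZBasis k)
      = if 0 ≤ k then ellTwoZBasis k else -ellTwoZBasis k)
    (K : lp (fun _ : ℤ => ℂ) 2 →L[ℂ] lp (fun _ : ℤ => ℂ) 2)
    (hK : IsCompactOperator K) :
    K ∈ (StarAlgebra.adjoin ℂ ({W, F₀} :
      Set (lp (fun _ : ℤ => ℂ) 2 →L[ℂ] lp (fun _ : ℤ => ℂ) 2))).topologicalClosure := by
  rw [← coe_ellTwoZHilbertBasis] at hW hF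
  exact compact_mem_closed_star_algebra_shift_sign_general ellTwoZHilbertBasis hW hF hK
end
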